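/- For all real x, Σ_{k∈ℤ} 1/(1 + (x − k)²) = π·sinh(2π)/(cosh(2π) − cos(2πx)), and consequently this sum is at most π·coth(π) for every real x. -/

import Mathlib

open Complex in
lemma aux_cot (a b : ℝ) (hb : 0 < b) :
    (Complex.cot (a + b * I)).im =
      - (Real.sinh (2 * b) / (Real.cosh (2 * b) - Real.cos (2 * a))) := by
  have hs : Complex.sin (a + b * I) =
      ((Real.sin a * Real.cosh b : ℝ) : ℂ) + ((Real.cos a * Real.sinh b : ℝ) : ℂ) * I := by
    rw [Complex.sin_add_mul_I]; push_cast; ring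
  have hc : Complex.cos (a + b * I) =
      ((Real.cos a * Real.cosh b : ℝ) : ℂ) + ((- (Real.sin a * Real.sinh b) : ℝ) : ℂ) * I := by
    rw [Complex.cos_add_mul_I]; push_cast; ring
  have h1 := Real.sin_sq_add_cos_sq a
  have h2 := Real.cosh_sq b
  have hsp : 0 < Real.sinh b := Real.sinh_pos_iff.mpr hb
  have hden : Real.cosh (2 * b) - Real.cos (2 * a) =
      2 * ((Real.sin a * Real.cosh b) ^ 2 + (Real.cos a * Real.sinh b) ^ 2) := by
    rw [Real.cosh_two_mul, Real.cos_two_mul, mul_pow, mul_pow, h2,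
      show Real.sin a ^ 2 = 1 - Real.cos a ^ 2 by linarith]
    ring
  have hpos : 0 < (Real.sin a * Real.cosh b) ^ 2 + (Real.cos a * Real.sinh b) ^ 2 := by
    have : (Real.sin a * Real.cosh b) ^ 2 + (Real.cos a * Real.sinh b) ^ 2
        = Real.sin a ^ 2 + Real.sinh b ^ 2 := by
      rw [mul_pow, mul_pow, h2, show Real.cos a ^ 2 = 1 - Real.sin a ^ 2 by linarith]
      ring
    rw [this]; positivity
  rw [hden, Real.sinh_two_mul, Complex.cot, hs, hc, Complex.div_im, Complex.normSq_add_mul_I]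
  simp only [Complex.add_im, Complex.add_re, Complex.ofReal_re, Complex.ofReal_im,
    Complex.re_ofReal_mul, Complex.im_ofReal_mul, Complex.I_re, Complex.I_im]
  set S := (Real.sin a * Real.cosh b) ^ 2 + (Real.cos a * Real.sinh b) ^ 2 with hS
  have hS0 : S ≠ 0 := hpos.ne'
  clear_value S
  field_simp
  linear_combination (-Real.sinh b * Real.cosh b) * h1

lemma aux_inv_im (y : ℝ) (z : ℂ) (hr : z.re = y) (hi : z.im = 1) :
    (1 / z).im = -(1 / (1 + y ^ 2)) := by
  rw [one_div, Complex.inv_im, Complex.normSq_apply, hr, hi]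
  rw [show y * y + 1 * 1 = 1 + y ^ 2 by ring]
  ring

open Complex in
lemma aux_sum (x : ℝ) :
    (∑' k : ℤ, 1 / (1 + (x - (k : ℝ)) ^ 2)) = - (Real.pi * Complex.cot (Real.pi * (x + I))).im := by
  have hz : (x + I : ℂ) ∈ Complex.integerComplement := by
    rintro ⟨n, hn⟩
    have := congrArg Complex.im hn
    simp at this
  have h := (summable_cotTerm hz).hasSum
  have he : ∑' n, cotTerm (x + I : ℂ) n = _ := (cot_series_rep' hz).symm
  rw [he] at h
  have h' := (Complex.hasSum_im h).neg
  set f : ℤ → ℝ := fun k => 1 / (1 + (x - (k : ℝ)) ^ 2) with hf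
  have hf0 : ∀ k, 0 ≤ f k := fun k => by simp only [hf]; positivity
  have hterm : ∀ n : ℕ, -(cotTerm (x + I : ℂ) n).im = f (n + 1) + f (-(n + 1 : ℤ)) := by
    intro n
    simp only [cotTerm, Complex.add_im, hf]
    rw [aux_inv_im (x - (n + 1)) _ (by simp) (by simp),
      aux_inv_im (x + (n + 1)) _ (by simp) (by simp)]
    push_cast
    ring
  simp only [hterm] at h'
  have s1 : Summable fun n : ℕ => f (n + 1) :=
    Summable.of_nonneg_of_le (fun n => hf0 _) (fun n => by linarith [hf0 (-(n + 1 : ℤ))]) h'.summable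
  have s2 : Summable fun n : ℕ => f (-(n + 1 : ℤ)) :=
    Summable.of_nonneg_of_le (fun n => hf0 _) (fun n => by linarith [hf0 (n + 1 : ℤ)]) h'.summable
  rw [tsum_of_add_one_of_neg_add_one s1 s2]
  have h3 := (s1.tsum_add s2).symm.trans h'.tsum_eq
  rw [Complex.sub_im, aux_inv_im x _ (by simp) (by simp)] at h3
  have h4 : f 0 = 1 / (1 + x ^ 2) := by simp [hf]
  linarith

theorem stmt9 (x : ℝ) :
    (∑' k : ℤ, 1 / (1 + (x - (k : ℝ)) ^ 2)) =
      Real.pi * Real.sinh (2 * Real.pi) /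
        (Real.cosh (2 * Real.pi) - Real.cos (2 * Real.pi * x)) ∧
    (∑' k : ℤ, 1 / (1 + (x - (k : ℝ)) ^ 2)) ≤
      Real.pi * (Real.cosh Real.pi / Real.sinh Real.pi) := by
  have h : (∑' k : ℤ, 1 / (1 + (x - (k : ℝ)) ^ 2)) =
      Real.pi * Real.sinh (2 * Real.pi) /
        (Real.cosh (2 * Real.pi) - Real.cos (2 * Real.pi * x)) := by
    rw [aux_sum, Complex.im_ofReal_mul,
      show (Real.pi * (x + Complex.I) : ℂ) = ((Real.pi * x : ℝ) : ℂ) + Real.pi * Complex.I by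
        push_cast; ring, aux_cot _ _ Real.pi_pos, ← mul_assoc 2 Real.pi x]
    ring
  refine ⟨h, ?_⟩
  rw [h]
  have hsp : 0 < Real.sinh Real.pi := Real.sinh_pos_iff.mpr Real.pi_pos
  have hcp := Real.cosh_pos Real.pi
  have hpi := Real.pi_pos
  have hc := Real.cos_le_one (2 * Real.pi * x)
  have h2 := Real.cosh_sq Real.pi
  have e : Real.pi * (Real.cosh Real.pi / Real.sinh Real.pi) =
      Real.pi * Real.sinh (2 * Real.pi) / (2 * Real.sinh Real.pi ^ 2) := by
    rw [Real.sinh_two_mul]; field_simp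
  rw [e, Real.sinh_two_mul]
  apply div_le_div_of_nonneg_left (by positivity) (by positivity)
  rw [Real.cosh_two_mul]
  linarith
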